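/- arXiv:1405.2221 — 11 statements merged into one kernel-verified Lean document; each statement's English description precedes it below -/
import Mathlib

section
/- Let P > 0 and 0 ≤ a₁ < a₂ be real numbers with a₁·a₂ ≥ P+1, and set γ = √((P+1)/(a₁·a₂)) (so that 0 < γ ≤ 1). Then (1/2)·log₂(1+P+γ²·a₁²+2·γ·a₁·√P) + (1/2)·log₂(1+P+γ²·a₂²+2·γ·a₂·√P) − (1/2)·log₂(γ²·(a₂−a₁)²) ≤ (1/2)·log₂(1+P) + log₂((a₂+a₁)/(a₂−a₁)) + 2. -/
/-- The received power with input and interference fully correlated is at most twice the power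
with the two uncorrelated. -/
lemma signal_power_le (γ a : ℝ) {P : ℝ} (hP : 0 ≤ P) :
    1 + P + γ ^ 2 * a ^ 2 + 2 * γ * a * √P ≤ 2 * (1 + P + γ ^ 2 * a ^ 2) := by
  nlinarith [sq_nonneg (γ * a - √P), Real.sq_sqrt hP]

/-- Outer bound for two fading values, regime `a₁·a₂ ≥ P+1`, evaluated at the
optimal scaling `γ = √((P+1)/(a₁·a₂))` (Theorem 4 of the paper). -/
theorem outer_bound_two_fading_strong (P a₁ a₂ : ℝ) (hP : 0 < P)
    (ha₁ : 0 ≤ a₁) (h₁₂ : a₁ < a₂) (hprod : P + 1 ≤ a₁ * a₂) :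
    let γ := Real.sqrt ((P + 1) / (a₁ * a₂))
    (1/2) * Real.logb 2 (1 + P + γ^2 * a₁^2 + 2 * γ * a₁ * Real.sqrt P)
      + (1/2) * Real.logb 2 (1 + P + γ^2 * a₂^2 + 2 * γ * a₂ * Real.sqrt P)
      - (1/2) * Real.logb 2 (γ^2 * (a₂ - a₁)^2)
    ≤ (1/2) * Real.logb 2 (1 + P) + Real.logb 2 ((a₂ + a₁) / (a₂ - a₁)) + 2 := by
  intro γ
  have ha₂ : 0 < a₂ := ha₁.trans_lt h₁₂
  have hprod_pos : 0 < a₁ * a₂ := by linarith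
  have ha₁_pos : 0 < a₁ := pos_of_mul_pos_left hprod_pos ha₂.le
  have hγ : 0 < γ := Real.sqrt_pos.2 (by positivity)
  have hγ_sq : γ ^ 2 * (a₁ * a₂) = 1 + P := by
    rw [Real.sq_sqrt (by positivity), div_mul_cancel₀ _ hprod_pos.ne', add_comm]
  have hsum : 0 < a₂ + a₁ := by positivity
  have hdiff : 0 < a₂ - a₁ := sub_pos.2 h₁₂
  have hbound₁ : 1 + P + γ ^ 2 * a₁ ^ 2 + 2 * γ * a₁ * √P ≤ 2 * (γ ^ 2 * a₁ * (a₂ + a₁)) := by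
    nlinarith [signal_power_le γ a₁ hP.le]
  have hbound₂ : 1 + P + γ ^ 2 * a₂ ^ 2 + 2 * γ * a₂ * √P ≤ 2 * (γ ^ 2 * a₂ * (a₂ + a₁)) := by
    nlinarith [signal_power_le γ a₂ hP.le]
  have hlog₁ := Real.logb_le_logb_of_le one_lt_two (by positivity) hbound₁
  have hlog₂ := Real.logb_le_logb_of_le one_lt_two (by positivity) hbound₂
  have htwo : Real.logb 2 2 = 1 := Real.logb_self_eq_one one_lt_two
  rw [Real.logb_mul (by positivity) (by positivity), Real.logb_mul (by positivity) (by positivity),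
    Real.logb_mul (by positivity) (by positivity), Real.logb_pow, htwo] at hlog₁ hlog₂
  rw [← hγ_sq] at hlog₁ hlog₂ ⊢
  rw [Real.logb_mul (x := γ ^ 2) (y := (a₂ - a₁) ^ 2) (by positivity) (by positivity),
    Real.logb_mul (x := γ ^ 2) (y := a₁ * a₂) (by positivity) (by positivity),
    Real.logb_mul ha₁_pos.ne' ha₂.ne', Real.logb_div hsum.ne' hdiff.ne', Real.logb_pow,
    Real.logb_pow]
  push_cast at hlog₁ hlog₂ ⊢
  linarith
end

section
/- Let P > 0 and 0 ≤ a₁ < a₂ be real numbers with a₁·a₂ ≤ P+1. Then (1/2)·log₂(1+P+a₁²+2·a₁·√P) + (1/2)·log₂(1+P+a₂²+2·a₂·√P) − (1/2)·log₂((a₂−a₁)²) ≤ (1/2)·log₂(1+P) + (1/2)·log₂(1+P+a₂²) − (1/2)·log₂((a₂−a₁)²) + 3/2. -/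
theorem Real.logb_two_le_add_of_le_two_pow_mul {x y : ℝ} (n : ℕ) (hx : 0 < x) (hy : 0 < y)
    (h : x ≤ 2 ^ n * y) : Real.logb 2 x ≤ n + Real.logb 2 y := by
  calc Real.logb 2 x ≤ Real.logb 2 (2 ^ n * y) :=
        Real.logb_le_logb_of_le (by norm_num) hx h
    _ = n + Real.logb 2 y := by
        rw [Real.logb_mul (by positivity) hy.ne', Real.logb_pow,
          Real.logb_self_eq_one (by norm_num), mul_one]


/-- Outer bound for two fading values, regime `a₁·a₂ ≤ P+1`, evaluated at `γ = 1`
(Theorem 4 of the paper). -/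
theorem outer_bound_two_fading_weak (P a₁ a₂ : ℝ) (hP : 0 < P)
    (ha₁ : 0 ≤ a₁) (h₁₂ : a₁ < a₂) (hprod : a₁ * a₂ ≤ P + 1) :
    (1/2) * Real.logb 2 (1 + P + a₁^2 + 2 * a₁ * Real.sqrt P)
      + (1/2) * Real.logb 2 (1 + P + a₂^2 + 2 * a₂ * Real.sqrt P)
      - (1/2) * Real.logb 2 ((a₂ - a₁)^2)
    ≤ (1/2) * Real.logb 2 (1 + P) + (1/2) * Real.logb 2 (1 + P + a₂^2)
      - (1/2) * Real.logb 2 ((a₂ - a₁)^2) + 3/2 := by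
  have cross (a : ℝ) : 2 * a * √P ≤ a ^ 2 + P := by
    nlinarith [sq_nonneg (a - √P), Real.sq_sqrt hP.le]
  have ha₂ : 0 ≤ a₂ := ha₁.trans h₁₂.le
  have hsq : a₁ ^ 2 ≤ P + 1 := by nlinarith
  have log₁ := Real.logb_two_le_add_of_le_two_pow_mul
    (x := 1 + P + a₁ ^ 2 + 2 * a₁ * √P) (y := 1 + P) 2
    (by positivity) (by positivity) (by linarith [cross a₁])
  have log₂ := Real.logb_two_le_add_of_le_two_pow_mul
    (x := 1 + P + a₂ ^ 2 + 2 * a₂ * √P) (y := 1 + P + a₂ ^ 2) 1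
    (by positivity) (by positivity) (by linarith [cross a₂])
  push_cast at log₁ log₂
  linarith
end

section
/- Let P > 0 and 0 < a₁ < a₂ be real numbers, and define f : ℝ → ℝ by f(x) = (1/2)·log(1+P+x·a₁²) + (1/2)·log(1+P+x·a₂²) − (1/2)·log(x·(a₂−a₁)²), where log is the natural logarithm. Set x* = (P+1)/(a₁·a₂). Then the second derivative of f at x* equals a₁³·a₂³/((1+P)²·(a₁+a₂)²); in particular it is strictly positive. -/
lemma hasDerivAt_const_add_mul_const (b c x : ℝ) :
    HasDerivAt (fun y => c + y * b) b x := by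
  simpa using ((hasDerivAt_id x).mul_const b).const_add c

lemma hasDerivAt_log_const_add_mul {b c x : ℝ} (h : c + x * b ≠ 0) :
    HasDerivAt (fun y => Real.log (c + y * b)) (b / (c + x * b)) x :=
  (hasDerivAt_const_add_mul_const b c x).log h

lemma hasDerivAt_div_const_add_mul {b c x : ℝ} (h : c + x * b ≠ 0) :
    HasDerivAt (fun y => b / (c + y * b)) (-(b ^ 2 / (c + x * b) ^ 2)) x :=
  ((hasDerivAt_const x b).fun_div (hasDerivAt_const_add_mul_const b c x) h).congr_deriv (by ring)

/-- Second derivative of the outer-bound objective `f` at the critical point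
`x* = (P+1)/(a₁·a₂)` (appendix proof of Theorem 4 of the paper). -/
theorem outer_bound_objective_second_deriv (P a₁ a₂ : ℝ) (hP : 0 < P)
    (ha₁ : 0 < a₁) (h₁₂ : a₁ < a₂) :
    let f : ℝ → ℝ := fun x =>
      (1/2) * Real.log (1 + P + x * a₁^2) + (1/2) * Real.log (1 + P + x * a₂^2)
        - (1/2) * Real.log (x * (a₂ - a₁)^2)
    let xs := (P + 1) / (a₁ * a₂)
    deriv (deriv f) xs = a₁^3 * a₂^3 / ((1 + P)^2 * (a₁ + a₂)^2) ∧
      0 < a₁^3 * a₂^3 / ((1 + P)^2 * (a₁ + a₂)^2) := by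
  intro f xs
  have ha₂ : 0 < a₂ := ha₁.trans h₁₂
  have hd : 0 < a₂ - a₁ := sub_pos.2 h₁₂
  have hxs : 0 < xs := by positivity
  have hne (b x : ℝ) (hx : 0 < x) : 1 + P + x * b ^ 2 ≠ 0 := by positivity
  have hne₀ (x : ℝ) (hx : 0 < x) : 0 + x * (a₂ - a₁) ^ 2 ≠ 0 := by positivity
  refine ⟨?_, by positivity⟩
  have hf' : deriv f =ᶠ[nhds xs] fun x =>
      (1/2) * (a₁^2 / (1 + P + x * a₁^2)) + (1/2) * (a₂^2 / (1 + P + x * a₂^2))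
        - (1/2) * ((a₂ - a₁)^2 / (0 + x * (a₂ - a₁)^2)) := by
    filter_upwards [lt_mem_nhds hxs] with x hx
    have h := (((hasDerivAt_log_const_add_mul (hne a₁ x hx)).const_mul (1/2)).fun_add
      ((hasDerivAt_log_const_add_mul (hne a₂ x hx)).const_mul (1/2))).fun_sub
      ((hasDerivAt_log_const_add_mul (hne₀ x hx)).const_mul (1/2))
    simpa only [zero_add] using h.deriv
  have h := (((hasDerivAt_div_const_add_mul (hne a₁ xs hxs)).const_mul (1/2)).fun_add
    ((hasDerivAt_div_const_add_mul (hne a₂ xs hxs)).const_mul (1/2))).fun_sub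
    ((hasDerivAt_div_const_add_mul (hne₀ xs hxs)).const_mul (1/2))
  rw [hf'.deriv_eq, h.deriv]
  have hQ : 0 < 1 + P := by positivity
  have hs : 0 < a₁ + a₂ := by positivity
  have h₁ : 1 + P + xs * a₁ ^ 2 = (1 + P) * (a₁ + a₂) / a₂ := by
    simp only [xs]; field_simp; ring
  have h₂ : 1 + P + xs * a₂ ^ 2 = (1 + P) * (a₁ + a₂) / a₁ := by
    simp only [xs]; field_simp; ring
  have h₃ : 0 + xs * (a₂ - a₁) ^ 2 = (1 + P) * (a₂ - a₁) ^ 2 / (a₁ * a₂) := by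
    simp only [xs]; field_simp; ring
  rw [h₁, h₂, h₃]
  field_simp
  ring
end

section
/- Let P > 0 and 0 < a₁ < a₂ be real numbers with a₁·a₂ ≥ P+1, and define f : ℝ → ℝ by f(x) = (1/2)·log(1+P+x·a₁²) + (1/2)·log(1+P+x·a₂²) − (1/2)·log(x·(a₂−a₁)²), where log is the natural logarithm. Set x* = (P+1)/(a₁·a₂), which lies in (0,1]. Then for every x with 0 < x ≤ 1, f(x) ≥ f(x*). -/
/-- When `a₁·a₂ ≥ P+1`, the critical point `x* = (P+1)/(a₁·a₂) ∈ (0,1]` minimizes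
the outer-bound objective `f` over `(0,1]` (appendix proof of Theorem 4 of the paper). -/
theorem outer_bound_objective_min (P a₁ a₂ : ℝ) (hP : 0 < P)
    (ha₁ : 0 < a₁) (h₁₂ : a₁ < a₂) (hprod : P + 1 ≤ a₁ * a₂) :
    let f : ℝ → ℝ := fun x =>
      (1/2) * Real.log (1 + P + x * a₁^2) + (1/2) * Real.log (1 + P + x * a₂^2)
        - (1/2) * Real.log (x * (a₂ - a₁)^2)
    let xs := (P + 1) / (a₁ * a₂)
    (0 < xs ∧ xs ≤ 1) ∧ ∀ x : ℝ, 0 < x → x ≤ 1 → f xs ≤ f x := by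
  intro f xs
  have ha₂ : 0 < a₂ := ha₁.trans h₁₂
  have hq : 0 < P + 1 := by linarith
  have hd : 0 < a₂ - a₁ := sub_pos.mpr h₁₂
  have hxs : 0 < xs := by positivity
  have hf : ∀ x, 0 < x → f x = (1/2) * Real.log
      ((1 + P + x * a₁^2) * (1 + P + x * a₂^2) / (x * (a₂ - a₁)^2)) := by
    intro x hx
    rw [Real.log_div (by positivity) (by positivity),
      Real.log_mul (by positivity) (by positivity)]
    ring
  have hmin : (1 + P + xs * a₁^2) * (1 + P + xs * a₂^2) / (xs * (a₂ - a₁)^2) =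
      (P + 1) * (a₁ + a₂)^2 / (a₂ - a₁)^2 := by
    simp only [xs]
    field_simp
    ring
  refine ⟨⟨hxs, (div_le_one (by positivity)).mpr hprod⟩, fun x hx _ => ?_⟩
  rw [hf xs hxs, hf x hx, hmin]
  gcongr (1/2) * Real.log ?_
  rw [div_le_div_iff₀ (by positivity) (by positivity)]
  have hsq : (P + 1) * (a₁ + a₂)^2 * x ≤ (1 + P + x * a₁^2) * (1 + P + x * a₂^2) := by
    nlinarith [sq_nonneg (P + 1 - x * (a₁ * a₂))]
  calc (P + 1) * (a₁ + a₂)^2 * (x * (a₂ - a₁)^2)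
      = (P + 1) * (a₁ + a₂)^2 * x * (a₂ - a₁)^2 := by ring
    _ ≤ _ := by gcongr
end

section
/- Let P > 0 and 0 ≤ a₁ < a₂ be real numbers with a₁·a₂ ≤ P+1, and define f : ℝ → ℝ by f(x) = (1/2)·log(1+P+x·a₁²) + (1/2)·log(1+P+x·a₂²) − (1/2)·log(x·(a₂−a₁)²), where log is the natural logarithm. Then for every x with 0 < x ≤ 1, f(x) ≥ f(1); that is, f is minimized over (0,1] at x = 1. -/
/-- When `a₁·a₂ ≤ P+1`, the outer-bound objective `f` is minimized over `(0,1]` at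
`x = 1` (appendix proof of Theorem 4 of the paper). -/
theorem outer_bound_objective_min_at_one (P a₁ a₂ : ℝ) (hP : 0 < P)
    (ha₁ : 0 ≤ a₁) (h₁₂ : a₁ < a₂) (hprod : a₁ * a₂ ≤ P + 1) :
    let f : ℝ → ℝ := fun x =>
      (1/2) * Real.log (1 + P + x * a₁^2) + (1/2) * Real.log (1 + P + x * a₂^2)
        - (1/2) * Real.log (x * (a₂ - a₁)^2)
    ∀ x : ℝ, 0 < x → x ≤ 1 → f 1 ≤ f x := by
  intro f x hx hx1
  have hd : 0 < (a₂ - a₁) ^ 2 := pow_pos (sub_pos.2 h₁₂) 2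
  have hA : ∀ y : ℝ, 0 < y → ∀ a : ℝ, 0 < 1 + P + y * a ^ 2 := fun y hy a => by positivity
  have hsq : (a₁ * a₂) ^ 2 ≤ (P + 1) ^ 2 :=
    pow_le_pow_left₀ (mul_nonneg ha₁ (ha₁.trans h₁₂.le)) hprod 2
  have hxsq : x * (a₁ * a₂) ^ 2 ≤ (P + 1) ^ 2 :=
    (mul_le_of_le_one_left (sq_nonneg _) hx1).trans hsq
  have key : x * ((1 + P + 1 * a₁ ^ 2) * (1 + P + 1 * a₂ ^ 2)) ≤
      (1 + P + x * a₁ ^ 2) * (1 + P + x * a₂ ^ 2) := by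
    linear_combination mul_nonneg (sub_nonneg.2 hx1) (sub_nonneg.2 hxsq)
  have hB₁ := hA 1 one_pos a₁
  have hB₂ := hA 1 one_pos a₂
  have hlog := Real.log_le_log (mul_pos hx (mul_pos hB₁ hB₂)) key
  rw [Real.log_mul hx.ne' (mul_pos hB₁ hB₂).ne', Real.log_mul hB₁.ne' hB₂.ne',
    Real.log_mul (hA x hx a₁).ne' (hA x hx a₂).ne'] at hlog
  simp only [f]
  rw [Real.log_mul hx.ne' hd.ne', Real.log_mul one_ne_zero hd.ne', Real.log_one]
  linarith
end

section
/- Let P > 0 and a₂ > 0 be real numbers with 1 ≤ a₂² ≤ P+1, and define g : ℝ → ℝ by g(α) = (1/4)·log(1+α·P) + (1/2)·log(1 + (1−α)·P/(a₂²+α·P+1)), where log is the natural logarithm. Set α* = (a₂²−1)/P, which lies in [0,1]. Then for every α with 0 ≤ α ≤ 1, g(α) ≤ g(α*). -/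
/-- `x / (c + x)²` is maximal at `x = c`, in logarithmic form. -/
lemma log_sub_two_mul_log_add_le {c x : ℝ} (hc : 0 < c) (hx : 0 < x) :
    Real.log x - 2 * Real.log (c + x) ≤ Real.log c - 2 * Real.log (c + c) := by
  have h : Real.log (x * (c + c) ^ 2) ≤ Real.log (c * (c + x) ^ 2) := by
    apply Real.log_le_log (by positivity)
    nlinarith [mul_nonneg hc.le (sq_nonneg (c - x))]
  rw [Real.log_mul (by positivity) (by positivity),
    Real.log_mul (by positivity) (by positivity), Real.log_pow, Real.log_pow] at h
  push_cast at h
  linarith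

/-- The second logarithm of the rate, split over the common numerator `c + P + 1`. -/
lemma log_one_add_div_eq {P c α : ℝ} (hP : 0 < P) (hc : 0 < c) (hα : 0 ≤ α) :
    Real.log (1 + (1 - α) * P / (c + α * P + 1))
      = Real.log (c + P + 1) - Real.log (c + (1 + α * P)) := by
  rw [← Real.log_div (by positivity) (by positivity)]
  congr 1
  have : c + α * P + 1 ≠ 0 := by positivity
  have : c + (1 + α * P) ≠ 0 := by positivity
  field_simp
  ring

/-- When `1 ≤ a₂² ≤ P+1`, the critical point `α* = (a₂²−1)/P ∈ [0,1]` maximizes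
the inner-bound rate `g` over `[0,1]` (appendix proof of Theorem 5 of the paper). -/
theorem inner_bound_rate_max (P a₂ : ℝ) (hP : 0 < P) (ha₂ : 0 < a₂)
    (h₁ : 1 ≤ a₂^2) (h₂ : a₂^2 ≤ P + 1) :
    let g : ℝ → ℝ := fun α =>
      (1/4) * Real.log (1 + α * P)
        + (1/2) * Real.log (1 + (1 - α) * P / (a₂^2 + α * P + 1))
    let αs := (a₂^2 - 1) / P
    (0 ≤ αs ∧ αs ≤ 1) ∧ ∀ α : ℝ, 0 ≤ α → α ≤ 1 → g α ≤ g αs := by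
  intro g αs
  have hc : 0 < a₂ ^ 2 := by positivity
  have hαs : 0 ≤ αs := div_nonneg (by linarith) hP.le
  have hαsP : 1 + αs * P = a₂ ^ 2 := by
    rw [div_mul_cancel₀ _ hP.ne']
    ring
  refine ⟨⟨hαs, (div_le_one hP).2 (by linarith)⟩, fun α hα _ => ?_⟩
  have key := log_sub_two_mul_log_add_le hc (x := 1 + α * P) (by positivity)
  simp only [g]
  rw [log_one_add_div_eq hP hc hα, log_one_add_div_eq hP hc hαs, hαsP]
  linarith
end

section
/- Let P > 0 and a₂ > 0 be real numbers with a₂² ≤ 1, and define g : ℝ → ℝ by g(α) = (1/4)·log(1+α·P) + (1/2)·log(1 + (1−α)·P/(a₂²+α·P+1)), where log is the natural logarithm. Then for every α with 0 ≤ α ≤ 1, g(α) ≤ g(0) = (1/2)·log(1 + P/(1+a₂²)). -/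
/-- When `a₂² ≤ 1`, the inner-bound rate `g` is maximized over `[0,1]` at `α = 0`
(appendix proof of Theorem 5 of the paper). -/
theorem inner_bound_rate_max_at_zero (P a₂ : ℝ) (hP : 0 < P) (ha₂ : 0 < a₂)
    (h : a₂^2 ≤ 1) :
    let g : ℝ → ℝ := fun α =>
      (1/4) * Real.log (1 + α * P)
        + (1/2) * Real.log (1 + (1 - α) * P / (a₂^2 + α * P + 1))
    (∀ α : ℝ, 0 ≤ α → α ≤ 1 → g α ≤ g 0) ∧
      g 0 = (1/2) * Real.log (1 + P / (1 + a₂^2)) := by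
  intro g
  have hg0 : g 0 = (1/2) * Real.log (1 + P / (1 + a₂^2)) := by
    simp [g, add_comm]
  refine ⟨fun α hα _ => ?_, hg0⟩
  rw [hg0]
  have hx : 0 ≤ α * P := by positivity
  have hfrac : 1 + (1 - α) * P / (a₂^2 + α * P + 1)
      = (1 + a₂^2 + P) / (1 + a₂^2 + α * P) := by
    rw [show a₂^2 + α * P + 1 = 1 + a₂^2 + α * P by ring]
    field_simp
    ring
  have hfrac₀ : 1 + P / (1 + a₂^2) = (1 + a₂^2 + P) / (1 + a₂^2) := by
    field_simp
  have hsq : (1 + α * P) * (1 + a₂^2)^2 ≤ (1 + a₂^2 + α * P)^2 := by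
    have : 0 ≤ α * P * ((1 + a₂^2) * (1 - a₂^2)) :=
      mul_nonneg hx (mul_nonneg (by positivity) (by linarith))
    nlinarith [sq_nonneg (α * P)]
  have hlog := Real.log_le_log (by positivity) hsq
  rw [Real.log_mul (by positivity) (by positivity), Real.log_pow, Real.log_pow] at hlog
  push_cast at hlog
  simp only [g]
  rw [hfrac, hfrac₀, Real.log_div (by positivity) (by positivity),
    Real.log_div (by positivity) (by positivity)]
  linarith
end

section
/- Let P > 0 and a₂ > 0 be real numbers with a₂² ≥ P+1, and define g : ℝ → ℝ by g(α) = (1/4)·log(1+α·P) + (1/2)·log(1 + (1−α)·P/(a₂²+α·P+1)), where log is the natural logarithm. Then for every α with 0 ≤ α ≤ 1, g(α) ≤ g(1) = (1/4)·log(1+P). -/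
theorem mul_one_add_div_sq_le {A x y : ℝ} (hx : 0 < x) (hxy : x ≤ y) (hyA : y ≤ A) :
    x * (1 + (y - x) / (A + x)) ^ 2 ≤ y := by
  have hA : 0 < A + x := by linarith
  have e : 1 + (y - x) / (A + x) = (A + y) / (A + x) := by
    field_simp
    ring
  have hsq : x * y ≤ A * A := by gcongr <;> linarith
  rw [e, div_pow, ← mul_div_assoc, div_le_iff₀ (by positivity)]
  linarith [mul_nonneg (sub_nonneg.2 hxy) (sub_nonneg.2 hsq)]

/-- When `a₂² ≥ P+1`, the inner-bound rate `g` is maximized over `[0,1]` at `α = 1`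
(appendix proof of Theorem 5 of the paper). -/
theorem inner_bound_rate_max_at_one (P a₂ : ℝ) (hP : 0 < P) (ha₂ : 0 < a₂)
    (h : P + 1 ≤ a₂^2) :
    let g : ℝ → ℝ := fun α =>
      (1/4) * Real.log (1 + α * P)
        + (1/2) * Real.log (1 + (1 - α) * P / (a₂^2 + α * P + 1))
    (∀ α : ℝ, 0 ≤ α → α ≤ 1 → g α ≤ g 1) ∧
      g 1 = (1/4) * Real.log (1 + P) := by
  intro g
  have g_one : g 1 = (1/4) * Real.log (1 + P) := by simp [g]
  refine ⟨fun α h0 h1 => ?_, g_one⟩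
  have hx : 0 < 1 + α * P := by positivity
  have hq : 0 < 1 + (1 - α) * P / (a₂^2 + α * P + 1) := by
    have := sub_nonneg.2 h1
    positivity
  have key : (1 + α * P) * (1 + (1 - α) * P / (a₂^2 + α * P + 1)) ^ 2 ≤ 1 + P := by
    convert mul_one_add_div_sq_le (A := a₂^2) hx (y := 1 + P) (by nlinarith)
      (by linarith) using 4
    ring
  have hlog := Real.log_le_log (by positivity) key
  rw [Real.log_mul hx.ne' (by positivity), Real.log_pow] at hlog
  push_cast at hlog
  rw [g_one]
  simp only [g]
  linarith
end

section
/- Let P > 0 and 0 ≤ a₁ < a₂ be real numbers with 1 < a₂² < P+1. Then ((1/4)·log₂(1+P) + (1/4)·log₂(P+1+a₂²) − (1/4)·log₂((a₂−a₁)²) + 3/2) − ((1/2)·log₂(1+P+a₂²) − (1/4)·log₂(a₂²) − 1/2) ≤ (1/2)·log₂((a₂+a₁)/(a₂−a₁)) + 2. -/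
/-- Case II of the gap computation in Theorem 6 of the paper: regime `1 < a₂² < P+1`. -/
theorem gap_case_II (P a₁ a₂ : ℝ) (hP : 0 < P) (ha₁ : 0 ≤ a₁) (h₁₂ : a₁ < a₂)
    (h₁ : 1 < a₂^2) (h₂ : a₂^2 < P + 1) :
    ((1/4) * Real.logb 2 (1 + P) + (1/4) * Real.logb 2 (P + 1 + a₂^2)
        - (1/4) * Real.logb 2 ((a₂ - a₁)^2) + 3/2)
      - ((1/2) * Real.logb 2 (1 + P + a₂^2) - (1/4) * Real.logb 2 (a₂^2) - 1/2)
    ≤ (1/2) * Real.logb 2 ((a₂ + a₁) / (a₂ - a₁)) + 2 := by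
  have ha₂ : 0 < a₂ := ha₁.trans_lt h₁₂
  have hd : 0 < a₂ - a₁ := sub_pos.mpr h₁₂
  have hlogP : Real.logb 2 (1 + P) ≤ Real.logb 2 (1 + P + a₂^2) :=
    Real.logb_le_logb_of_le (by norm_num) (by positivity) (by linarith)
  have hloga : Real.logb 2 a₂ ≤ Real.logb 2 (a₂ + a₁) :=
    Real.logb_le_logb_of_le (by norm_num) ha₂ (by linarith)
  rw [Real.logb_div (by positivity) hd.ne', Real.logb_pow, Real.logb_pow, add_comm P 1]
  push_cast
  linarith
end

section
/- Let P > 0 and 0 ≤ a₁ < a₂ be real numbers with a₁·a₂ ≤ P+1 ≤ a₂². Then ((1/4)·log₂(1+P) + (1/4)·log₂(P+1+a₂²) − (1/4)·log₂((a₂−a₁)²) + 3/2) − (1/4)·log₂(1+P) ≤ (1/2)·log₂((a₂+a₁)/(a₂−a₁)) + 2. -/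
/-- Case III of the gap computation in Theorem 6 of the paper: regime
`a₁·a₂ ≤ P+1 ≤ a₂²`. -/
theorem gap_case_III (P a₁ a₂ : ℝ) (hP : 0 < P) (ha₁ : 0 ≤ a₁) (h₁₂ : a₁ < a₂)
    (hprod : a₁ * a₂ ≤ P + 1) (ha₂ : P + 1 ≤ a₂^2) :
    ((1/4) * Real.logb 2 (1 + P) + (1/4) * Real.logb 2 (P + 1 + a₂^2)
        - (1/4) * Real.logb 2 ((a₂ - a₁)^2) + 3/2)
      - (1/4) * Real.logb 2 (1 + P)
    ≤ (1/2) * Real.logb 2 ((a₂ + a₁) / (a₂ - a₁)) + 2 := by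
  have ha₂_pos : 0 < a₂ := ha₁.trans_lt h₁₂
  have hdiff : 0 < a₂ - a₁ := sub_pos.2 h₁₂
  have hsum : 0 < a₂ + a₁ := by linarith
  have hlog : Real.logb 2 (P + 1 + a₂ ^ 2) ≤ 1 + 2 * Real.logb 2 (a₂ + a₁) := by
    calc Real.logb 2 (P + 1 + a₂ ^ 2)
        ≤ Real.logb 2 (2 * (a₂ + a₁) ^ 2) :=
          Real.logb_le_logb_of_le (by norm_num) (by positivity) (by nlinarith)
      _ = 1 + 2 * Real.logb 2 (a₂ + a₁) := by
          rw [Real.logb_mul two_ne_zero (pow_pos hsum 2).ne', Real.logb_pow,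
            Real.logb_self_eq_one one_lt_two]
          norm_num
  rw [Real.logb_div hsum.ne' hdiff.ne', Real.logb_pow]
  push_cast
  linarith
end

section
/- Let M ≥ 1 be a natural number, let P > 0, and let a : Fin M → ℝ be monotone (nondecreasing) with 0 ≤ a(0). Let ā = (∑ⱼ a(j))/M be the mean of the values a(j), and let ε = a(M−1) − a(0). Then for every index j, (1/2)·log₂(1+P) − (1/2)·log₂( (P+1) / (1 + (ā − a(j))²·P/(P + a(j)² + 1)) ) ≤ (1/2)·log₂(1 + ε²·P/(P + a(0)² + 1)). -/
/-- The mean of finitely many reals lying in `[l, u]` lies in `[l, u]`. -/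
theorem mean_mem_Icc {M : ℕ} (hM : 1 ≤ M) {a : Fin M → ℝ} {l u : ℝ}
    (h : ∀ i, a i ∈ Set.Icc l u) : (∑ i, a i) / (M : ℝ) ∈ Set.Icc l u := by
  have hM' : (0 : ℝ) < M := by exact_mod_cast hM
  have hl := Finset.card_nsmul_le_sum Finset.univ a l fun i _ => (h i).1
  have hu := Finset.sum_le_card_nsmul Finset.univ a u fun i _ => (h i).2
  simp only [Finset.card_univ, Fintype.card_fin, nsmul_eq_mul] at hl hu
  exact ⟨by rw [le_div_iff₀ hM']; linarith, by rw [div_le_iff₀ hM']; linarith⟩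

/-- Constant additive gap for `M` small fading values (Lemma 2 of the paper):
Costa pre-coding against the averaged state attains the outer bound
`(1/2)·log₂(1+P)` to within `(1/2)·log₂(1 + ε²·P/(P + a(0)² + 1))`. -/
theorem constant_gap_M_small_fading (M : ℕ) (hM : 1 ≤ M) (P : ℝ) (hP : 0 < P)
    (a : Fin M → ℝ) (hmono : Monotone a) (h0 : 0 ≤ a ⟨0, by omega⟩) :
    ∀ j : Fin M,
      (1/2) * Real.logb 2 (1 + P)
        - (1/2) * Real.logb 2 ((P + 1) /
            (1 + ((∑ i, a i) / (M : ℝ) - a j)^2 * P / (P + (a j)^2 + 1)))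
      ≤ (1/2) * Real.logb 2
          (1 + (a ⟨M - 1, by omega⟩ - a ⟨0, by omega⟩)^2 * P
            / (P + (a ⟨0, by omega⟩)^2 + 1)) := by
  intro j
  have hmem : ∀ i, a i ∈ Set.Icc (a ⟨0, by omega⟩) (a ⟨M - 1, by omega⟩) := fun i =>
    ⟨hmono (Fin.le_def.2 (Nat.zero_le _)), hmono (Fin.le_def.2 (Nat.le_sub_one_of_lt i.2))⟩
  obtain ⟨hml, hmu⟩ := mean_mem_Icc hM hmem
  obtain ⟨hjl, hju⟩ := hmem j
  have hD : 0 < 1 + ((∑ i, a i) / (M : ℝ) - a j) ^ 2 * P / (P + (a j) ^ 2 + 1) := by positivity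
  rw [Real.logb_div (by positivity) hD.ne', add_comm P 1, ← mul_sub, sub_sub_cancel]
  have hsq : ((∑ i, a i) / (M : ℝ) - a j) ^ 2
      ≤ (a ⟨M - 1, by omega⟩ - a ⟨0, by omega⟩) ^ 2 :=
    sq_le_sq' (by linarith) (by linarith)
  have hlog := Real.logb_le_logb_of_le (b := 2) (by norm_num) hD
    (show _ ≤ 1 + (a ⟨M - 1, by omega⟩ - a ⟨0, by omega⟩) ^ 2 * P
      / (P + (a ⟨0, by omega⟩) ^ 2 + 1) by gcongr)
  linarith
end
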